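/- Let f ∈ L¹([0,1]²) and assume ω(f;u,v)₁ = O(uv), i.e. M := sup_{u,v>0} ω(f;u,v)₁/(uv) < ∞. Then there exist a function g ∈ H₁^{(2)} and univariate functions φ₁, φ₂ such that f(x,y) = g(x,y) + φ₁(x) + φ₂(y) for almost every (x,y) ∈ ℝ², and moreover v₁^{(2)}(g) = sup_{u,v>0} ω(f;u,v)₁/(uv). -/

import Mathlib

open MeasureTheory Filter Set
open scoped ENNReal

noncomputable section

/-- A function of two real variables that is 1-periodic in each variable. -/
def BiPeriodic (f : ℝ → ℝ → ℝ) : Prop :=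
  (∀ x y, f (x + 1) y = f x y) ∧ (∀ x y, f x (y + 1) = f x y)

/-- A 1-periodic function of one real variable. -/
def Periodic1 (g : ℝ → ℝ) : Prop := ∀ x, g (x + 1) = g x

/-- The `L^p` norm of a function over `[0,1]^2` (as a value in `[0,∞]`). -/
noncomputable def lpNorm2 (p : ℝ) (f : ℝ → ℝ → ℝ) : ℝ≥0∞ :=
  (∫⁻ x in Set.Icc (0:ℝ) 1, ∫⁻ y in Set.Icc (0:ℝ) 1,
      ENNReal.ofReal (|f x y| ^ p)) ^ (1 / p)

/-- The `L^p` norm of a function over `[0,1]` (as a value in `[0,∞]`). -/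
noncomputable def lpNorm1 (p : ℝ) (g : ℝ → ℝ) : ℝ≥0∞ :=
  (∫⁻ x in Set.Icc (0:ℝ) 1, ENNReal.ofReal (|g x| ^ p)) ^ (1 / p)

/-- Membership in `L^p([0,1]^2)`: measurable, 1-periodic in each variable,
finite `L^p` norm. -/
def MemLp2 (p : ℝ) (f : ℝ → ℝ → ℝ) : Prop :=
  Measurable (Function.uncurry f) ∧ BiPeriodic f ∧ lpNorm2 p f < ⊤

/-- Membership in `L^p([0,1])` for 1-periodic functions of one variable. -/
def MemLp1 (p : ℝ) (g : ℝ → ℝ) : Prop :=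
  Measurable g ∧ Periodic1 g ∧ lpNorm1 p g < ⊤

/-- The (total) `L^p` modulus of continuity `ω(f;δ)_p` of a bivariate function. -/
noncomputable def modulus2 (p : ℝ) (f : ℝ → ℝ → ℝ) (δ : ℝ) : ℝ≥0∞ :=
  ⨆ (h : ℝ × ℝ) (_ : Real.sqrt (h.1 ^ 2 + h.2 ^ 2) ≤ δ),
    lpNorm2 p (fun x y => f (x + h.1) (y + h.2) - f x y)

/-- The `L^p` modulus of continuity `ω(g;δ)_p` of a univariate function. -/
noncomputable def modulus1 (p : ℝ) (g : ℝ → ℝ) (δ : ℝ) : ℝ≥0∞ :=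
  ⨆ (h : ℝ) (_ : h ∈ Set.Icc 0 δ), lpNorm1 p (fun x => g (x + h) - g x)

/-- The mixed `L^p` modulus of continuity `ω(f;u,v)_p`. -/
noncomputable def mixedModulus (p : ℝ) (f : ℝ → ℝ → ℝ) (u v : ℝ) : ℝ≥0∞ :=
  ⨆ (s : ℝ) (_ : s ∈ Set.Icc 0 u) (t : ℝ) (_ : t ∈ Set.Icc 0 v),
    lpNorm2 p (fun x y => f (x + s) (y + t) - f (x + s) y - f x (y + t) + f x y)

/-- `J_p(f) = ∫₀¹ t^{-1/p} ω(f;t)_p dt/t`. -/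
noncomputable def Jp (p : ℝ) (f : ℝ → ℝ → ℝ) : ℝ≥0∞ :=
  ∫⁻ t in Set.Ioc (0:ℝ) 1, ENNReal.ofReal (t ^ (-(1/p)) / t) * modulus2 p f t

/-- `K_p(f) = ∫₀¹ t^{-1/p} [ω(f;t,1)_p + ω(f;1,t)_p] dt/t`. -/
noncomputable def Kp (p : ℝ) (f : ℝ → ℝ → ℝ) : ℝ≥0∞ :=
  ∫⁻ t in Set.Ioc (0:ℝ) 1,
    ENNReal.ofReal (t ^ (-(1/p)) / t) * (mixedModulus p f t 1 + mixedModulus p f 1 t)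

/-- `I_p(f) = ∫₀¹∫₀¹ (uv)^{-1/p} ω(f;u,v)_p (du/u)(dv/v)`. -/
noncomputable def Ip (p : ℝ) (f : ℝ → ℝ → ℝ) : ℝ≥0∞ :=
  ∫⁻ u in Set.Ioc (0:ℝ) 1, ∫⁻ v in Set.Ioc (0:ℝ) 1,
    ENNReal.ofReal ((u * v) ^ (-(1/p)) / (u * v)) * mixedModulus p f u v

/-- The essential supremum norm of `f` over `[0,1]^2`. -/
noncomputable def supNorm2 (f : ℝ → ℝ → ℝ) : ℝ≥0∞ :=
  essSup (fun z : ℝ × ℝ => ENNReal.ofReal |f z.1 z.2|)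
    (volume.restrict ((Set.Icc (0:ℝ) 1) ×ˢ (Set.Icc (0:ℝ) 1)))

/-- The Wiener `p`-variation of a 1-periodic function `g`, as a value in `[0,∞]`:
the supremum over partitions `x₀ < x₁ < ... < xₙ = x₀ + 1` of
`(∑ |g(x_{k+1}) - g(x_k)|^p)^{1/p}`. -/
noncomputable def vp (p : ℝ) (g : ℝ → ℝ) : ℝ≥0∞ :=
  ⨆ (n : ℕ) (x : ℕ → ℝ) (_ : ∀ i < n, x i < x (i + 1)) (_ : x n = x 0 + 1),
    ENNReal.ofReal ((∑ k ∈ Finset.range n, |g (x (k + 1)) - g (x k)| ^ p) ^ (1 / p))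

/-- The Hardy–Vitali type total `p`-variation of a bivariate function,
as a value in `[0,∞]`: the supremum over nets of
`(∑∑ |Δf(x_i,y_j)|^p)^{1/p}`. -/
noncomputable def vp2 (p : ℝ) (f : ℝ → ℝ → ℝ) : ℝ≥0∞ :=
  ⨆ (m : ℕ) (n : ℕ) (x : ℕ → ℝ) (y : ℕ → ℝ)
    (_ : ∀ i < m, x i < x (i + 1)) (_ : x m = x 0 + 1)
    (_ : ∀ j < n, y j < y (j + 1)) (_ : y n = y 0 + 1),
    ENNReal.ofReal ((∑ i ∈ Finset.range m, ∑ j ∈ Finset.range n,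
      |f (x (i + 1)) (y (j + 1)) - f (x (i + 1)) (y j)
        - f (x i) (y (j + 1)) + f (x i) (y j)| ^ p) ^ (1 / p))

/-- Membership in the Hardy class `H_p^{(2)}`: finite Vitali `p`-variation and
all linear sections of bounded `p`-variation. -/
def MemHp2 (p : ℝ) (f : ℝ → ℝ → ℝ) : Prop :=
  vp2 p f < ⊤ ∧ (∀ x, vp p (fun y => f x y) < ⊤) ∧ (∀ y, vp p (fun x => f x y) < ⊤)

/-- Membership in the mixed norm class `V_p[V_p]`: all sections have bounded
`p`-variation and the functions `x ↦ v_p(f_x)`, `y ↦ v_p(f_y)` are themselves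
of bounded `p`-variation. -/
def MemVpVp (p : ℝ) (f : ℝ → ℝ → ℝ) : Prop :=
  (∀ x, vp p (fun y => f x y) < ⊤) ∧ (∀ y, vp p (fun x => f x y) < ⊤) ∧
  vp p (fun x => (vp p (fun y => f x y)).toReal) < ⊤ ∧
  vp p (fun y => (vp p (fun x => f x y)).toReal) < ⊤

/-- `W_p(f) = v_p(φ_p[f]) + v_p(ψ_p[f])`, where `φ_p[f](x) = v_p(f_x)` and
`ψ_p[f](y) = v_p(f_y)`. -/
noncomputable def Wp (p : ℝ) (f : ℝ → ℝ → ℝ) : ℝ≥0∞ :=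
  vp p (fun x => (vp p (fun y => f x y)).toReal)
    + vp p (fun y => (vp p (fun x => f x y)).toReal)

/-- Membership in `L^p_0([0,1]^2)`: membership in `L^p([0,1]^2)` together with
vanishing of the linear mean values `∫₀¹ f(x,t) dt` and `∫₀¹ f(t,y) dt` for a.e.
`x` resp. `y`. -/
def MemLp20 (p : ℝ) (f : ℝ → ℝ → ℝ) : Prop :=
  MemLp2 p f ∧ (∀ᵐ x : ℝ ∂volume, ∫ t in (0:ℝ)..1, f x t = 0) ∧
    (∀ᵐ y : ℝ ∂volume, ∫ t in (0:ℝ)..1, f t y = 0)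

/-- `T` is a trigonometric polynomial of degree `(n,m)` in two variables. -/
def IsTrigPoly2 (n m : ℕ) (T : ℝ → ℝ → ℝ) : Prop :=
  ∃ a b c d : ℕ → ℕ → ℝ, ∀ x y : ℝ,
    T x y = ∑ j ∈ Finset.range (n + 1), ∑ k ∈ Finset.range (m + 1),
      (a j k * Real.cos (2 * Real.pi * j * x) * Real.cos (2 * Real.pi * k * y)
        + b j k * Real.cos (2 * Real.pi * j * x) * Real.sin (2 * Real.pi * k * y)
        + c j k * Real.sin (2 * Real.pi * j * x) * Real.cos (2 * Real.pi * k * y)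
        + d j k * Real.sin (2 * Real.pi * j * x) * Real.sin (2 * Real.pi * k * y))

end

/-!
For `h > 0` the increment over a rectangle of the Steklov mean of `f` with step `h` is `h⁻²` times
the integral of `Δ(h,h)f` over that rectangle. Summing over a net, the Vitali variation of the mean
is at most `h⁻² ‖Δ(h,h)f‖₁ ≤ M`. The means converge to `f` almost everywhere as `h → 0`; subtracting
their values on two lines `x = x₀` and `y = y₀` meeting at a good point makes them bounded, and a
limit along an ultrafilter is a function `g` with `v₁⁽²⁾(g) ≤ M`, equal almost everywhere to
`f(x,y) - f(x,y₀) - f(x₀,y) + f(x₀,y₀)`.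

Conversely `f` and `g` have the same mixed differences almost everywhere. Averaging the net sums of
`g` over all translates of a regular mesh with steps `r, r'` gives `m n ‖Δ(r,r')f‖₁ ≤ v₁⁽²⁾(g)`
whenever `m r, n r' < 1`. Dividing `s` and `t` into ever smaller equal steps, subadditivity of the
mixed difference yields `‖Δ(s,t)f‖₁ ≤ s t v₁⁽²⁾(g)`.
-/

open Topology

/-- The increment of `f` over the rectangle `[a, b] × [c, d]`. -/
noncomputable def rectIncr (f : ℝ → ℝ → ℝ) (a b c d : ℝ) : ℝ :=
  f b d - f b c - f a d + f a c

/-- The mixed difference `Δ(s,t)f` of the paper, as a function of the base point. -/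
noncomputable def mixedDiff (f : ℝ → ℝ → ℝ) (s t x y : ℝ) : ℝ :=
  rectIncr f x (x + s) y (y + t)

/-- The points `x 0 < x 1 < ⋯ < x n` partition one period of length `1`. The values of `x` beyond
index `n` are irrelevant. -/
def IsPeriodPartition (n : ℕ) (x : ℕ → ℝ) : Prop :=
  (∀ i < n, x i < x (i + 1)) ∧ x n = x 0 + 1

/-- The best constant `C` in `ω(f;u,v)_p ≤ C u v`, that is `sup_{u,v>0} ω(f;u,v)_p / (uv)`. -/
noncomputable def mixedLipConst (p : ℝ) (f : ℝ → ℝ → ℝ) : ℝ≥0∞ :=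
  ⨆ (u : ℝ) (_ : 0 < u) (v : ℝ) (_ : 0 < v), mixedModulus p f u v / ENNReal.ofReal (u * v)

section Variation

variable {p : ℝ} {g : ℝ → ℝ → ℝ} {C : ℝ≥0∞}

lemma vp_le_iff {φ : ℝ → ℝ} : vp p φ ≤ C ↔ ∀ n x, IsPeriodPartition n x →
    ENNReal.ofReal ((∑ k ∈ Finset.range n, |φ (x (k + 1)) - φ (x k)| ^ p) ^ (1 / p)) ≤ C := by
  simp only [vp, iSup_le_iff, IsPeriodPartition, and_imp]

lemma vp2_le_iff : vp2 p g ≤ C ↔ ∀ m n x y, IsPeriodPartition m x → IsPeriodPartition n y →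
    ENNReal.ofReal ((∑ i ∈ Finset.range m, ∑ j ∈ Finset.range n,
      |rectIncr g (x i) (x (i + 1)) (y j) (y (j + 1))| ^ p) ^ (1 / p)) ≤ C := by
  simp only [vp2, iSup_le_iff, IsPeriodPartition, and_imp, rectIncr]

lemma vp2_one_le_iff : vp2 1 g ≤ C ↔ ∀ m n x y, IsPeriodPartition m x → IsPeriodPartition n y →
    ∑ i ∈ Finset.range m, ∑ j ∈ Finset.range n,
      ‖rectIncr g (x i) (x (i + 1)) (y j) (y (j + 1))‖ₑ ≤ C := by
  simp only [vp2_le_iff, Real.rpow_one, div_one, Real.enorm_eq_ofReal_abs,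
    ENNReal.ofReal_sum_of_nonneg, Finset.sum_nonneg, abs_nonneg, implies_true]

/-- The two-cell partition of `[a, a + 1]` with middle point `b`. -/
noncomputable def splitPeriod (a b : ℝ) : ℕ → ℝ
  | 0 => a
  | 1 => b
  | _ => a + 1

lemma isPeriodPartition_splitPeriod {a b : ℝ} (hb : b ∈ Ioo a (a + 1)) :
    IsPeriodPartition 2 (splitPeriod a b) := by
  refine ⟨fun i hi => ?_, rfl⟩
  interval_cases i
  exacts [hb.1, hb.2]

/-- The regular mesh `x, x + r, …, x + n r`, completed by `x + 1`. -/
noncomputable def meshPartition (n : ℕ) (r x : ℝ) (i : ℕ) : ℝ :=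
  if i ≤ n then x + i * r else x + 1

lemma isPeriodPartition_meshPartition {n : ℕ} {r : ℝ} (hr : 0 < r) (hn : n * r < 1) (x : ℝ) :
    IsPeriodPartition (n + 1) (meshPartition n r x) := by
  refine ⟨fun i hi => ?_, by simp [meshPartition]⟩
  rcases (Nat.lt_succ_iff.1 hi).lt_or_eq with hin | rfl
  · simp only [meshPartition, hin.le, Nat.succ_le_of_lt hin, if_true]
    push_cast
    linarith
  · simpa [meshPartition] using hn

lemma meshPartition_of_le {n i : ℕ} (hi : i ≤ n) (r x : ℝ) :
    meshPartition n r x i = x + i * r := if_pos hi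

lemma BiPeriodic.periodic_left (hg : BiPeriodic g) : Function.Periodic g 1 :=
  fun x => funext (hg.1 x)

lemma BiPeriodic.swap (hg : BiPeriodic g) : BiPeriodic (Function.swap g) :=
  ⟨fun x y => hg.2 y x, fun x y => hg.1 y x⟩

lemma ofReal_abs_sub_le_vp {φ : ℝ → ℝ} (hp : 0 < p) (hφ : Function.Periodic φ 1) (a b : ℝ) :
    ENNReal.ofReal |φ b - φ a| ≤ vp p φ := by
  obtain ⟨b', hb', hφb⟩ := hφ.exists_mem_Ico one_pos b a
  rw [hφb]
  rcases hb'.1.eq_or_lt with rfl | hab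
  · simp
  refine le_trans (ENNReal.ofReal_le_ofReal ?_)
    (vp_le_iff.1 le_rfl 2 _ (isPeriodPartition_splitPeriod ⟨hab, hb'.2⟩))
  rw [one_div, Real.le_rpow_inv_iff_of_pos (abs_nonneg _) (by positivity) hp,
    Finset.sum_range_succ, Finset.sum_range_one]
  exact le_add_of_nonneg_right (by positivity)

lemma vp_sub_le_vp2 (hp : 0 < p) (hg : BiPeriodic g) (a b : ℝ) :
    vp p (fun y => g b y - g a y) ≤ vp2 p g := by
  obtain ⟨b', hb', hgb⟩ := hg.periodic_left.exists_mem_Ico one_pos b a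
  rw [hgb, vp_le_iff]
  intro n y hy
  rcases hb'.1.eq_or_lt with rfl | hab
  · simp [Real.zero_rpow hp.ne', hp.ne']
  refine le_trans (ENNReal.ofReal_le_ofReal ?_)
    (vp2_le_iff.1 le_rfl 2 n _ y (isPeriodPartition_splitPeriod ⟨hab, hb'.2⟩) hy)
  refine Real.rpow_le_rpow (by positivity) ?_ (by positivity)
  rw [Finset.sum_range_succ, Finset.sum_range_one]
  refine le_add_of_le_of_nonneg (Finset.sum_le_sum fun j _ => le_of_eq ?_) (by positivity)
  simp only [rectIncr, splitPeriod]
  ring_nf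

lemma ofReal_abs_rectIncr_le_vp2 (hp : 0 < p) (hg : BiPeriodic g) (a b c d : ℝ) :
    ENNReal.ofReal |rectIncr g a b c d| ≤ vp2 p g := by
  have hper : Function.Periodic (fun y => g b y - g a y) 1 := fun y => by simp only [hg.2]
  calc ENNReal.ofReal |rectIncr g a b c d|
      = ENNReal.ofReal |(g b d - g a d) - (g b c - g a c)| := by rw [rectIncr]; ring_nf
    _ ≤ vp p (fun y => g b y - g a y) := ofReal_abs_sub_le_vp hp hper c d
    _ ≤ vp2 p g := vp_sub_le_vp2 hp hg a b

lemma rectIncr_swap (g : ℝ → ℝ → ℝ) (a b c d : ℝ) :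
    rectIncr (Function.swap g) a b c d = rectIncr g c d a b := by
  simp only [rectIncr, Function.swap]
  ring

lemma vp2_swap_le (p : ℝ) (g : ℝ → ℝ → ℝ) : vp2 p (Function.swap g) ≤ vp2 p g := by
  refine vp2_le_iff.2 fun m n x y hx hy => ?_
  refine le_of_eq_of_le ?_ (vp2_le_iff.1 le_rfl n m y x hy hx)
  simp only [rectIncr_swap]
  rw [Finset.sum_comm]

lemma vp_section_le_vp2 (hp : 0 < p) (hg : BiPeriodic g) {a : ℝ} (ha : ∀ y, g a y = 0) (x : ℝ) :
    vp p (fun y => g x y) ≤ vp2 p g := by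
  simpa only [ha, sub_zero] using vp_sub_le_vp2 hp hg a x

lemma memHp2_of_vanishing_sections (hp : 0 < p) (hg : BiPeriodic g) (hfin : vp2 p g < ⊤) {a b : ℝ}
    (ha : ∀ y, g a y = 0) (hb : ∀ x, g x b = 0) : MemHp2 p g :=
  ⟨hfin, fun x => (vp_section_le_vp2 hp hg ha x).trans_lt hfin, fun y =>
    ((vp_section_le_vp2 hp hg.swap hb y).trans (vp2_swap_le p g)).trans_lt hfin⟩

lemma vp2_le_of_tendsto_rectIncr {ι : Type*} {l : Filter ι} [l.NeBot] {A : ι → ℝ → ℝ → ℝ}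
    (hp : 0 < p) (hA : ∀ᶠ i in l, vp2 p (A i) ≤ C)
    (hlim : ∀ a b c d, Tendsto (fun i => rectIncr (A i) a b c d) l (𝓝 (rectIncr g a b c d))) :
    vp2 p g ≤ C := by
  refine vp2_le_iff.2 fun m n x y hx hy => le_of_tendsto (ENNReal.tendsto_ofReal ?_)
    (hA.mono fun i hi => vp2_le_iff.1 hi m n x y hx hy)
  refine Tendsto.rpow_const ?_ (Or.inr (by positivity))
  exact tendsto_finsetSum _ fun i _ => tendsto_finsetSum _ fun j _ =>
    (hlim _ _ _ _).abs.rpow_const (Or.inr hp.le)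

/-- A Helly-type selection principle: `g` is a pointwise limit along an ultrafilter finer than `l`,
so no diagonal subsequence is needed. -/
lemma exists_biPeriodic_limit_rectIncr {ι : Type*} {l : Filter ι} [l.NeBot] {A : ι → ℝ → ℝ → ℝ}
    (hp : 0 < p) (hC : C ≠ ⊤) (hper : ∀ i, BiPeriodic (A i)) (hA : ∀ᶠ i in l, vp2 p (A i) ≤ C)
    (x₀ y₀ : ℝ) :
    ∃ g, BiPeriodic g ∧ vp2 p g ≤ C ∧
      ∀ x y L, Tendsto (fun i => rectIncr (A i) x₀ x y₀ y) l (𝓝 L) → g x y = L := by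
  set U := Ultrafilter.of l
  have hU : (U : Filter ι) ≤ l := Ultrafilter.of_le l
  have hbdd (x y : ℝ) : ∀ᶠ i in l, rectIncr (A i) x₀ x y₀ y ∈ Icc (-C.toReal) C.toReal := by
    filter_upwards [hA] with i hi
    exact abs_le.1 ((ENNReal.ofReal_le_iff_le_toReal hC).1
      ((ofReal_abs_rectIncr_le_vp2 hp (hper i) x₀ x y₀ y).trans hi))
  have hcpt (x y : ℝ) : ∃ L, Tendsto (fun i => rectIncr (A i) x₀ x y₀ y) U (𝓝 L) := by
    obtain ⟨L, -, hL⟩ := isCompact_Icc.ultrafilter_le_nhds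
      (U.map fun i => rectIncr (A i) x₀ x y₀ y) (le_principal_iff.2 (hU (hbdd x y)))
    exact ⟨L, hL⟩
  choose g hg using hcpt
  refine ⟨g, ⟨fun x y => ?_, fun x y => ?_⟩, ?_, fun x y L hL =>
    tendsto_nhds_unique (hg x y) (hL.mono_left hU)⟩
  · exact tendsto_nhds_unique (hg (x + 1) y) (by simpa only [rectIncr, (hper _).1] using hg x y)
  · exact tendsto_nhds_unique (hg x (y + 1)) (by simpa only [rectIncr, (hper _).2] using hg x y)
  · refine vp2_le_of_tendsto_rectIncr hp (hA.filter_mono hU) fun a b c d => ?_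
    refine ((((hg b d).sub (hg b c)).sub (hg a d)).add (hg a c)).congr fun i => ?_
    simp only [rectIncr]
    ring

end Variation

section PeriodicIntegral

lemma setLIntegral_Ioc_add_one {F : ℝ → ℝ≥0∞} (hF : Function.Periodic F 1) (a : ℝ) :
    ∫⁻ x in Ioc a (a + 1), F x = ∫⁻ x in Icc (0 : ℝ) 1, F x := by
  rw [← setLIntegral_congr (Ioc_ae_eq_Icc (μ := volume) (a := (0 : ℝ)) (b := 1))]
  have hunit := isAddFundamentalDomain_Ioc (T := (1 : ℝ)) one_pos 0
  rw [zero_add] at hunit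
  refine (isAddFundamentalDomain_Ioc one_pos a).setLIntegral_eq hunit F ?_
  rintro ⟨_, n, rfl⟩ x
  exact (congrArg F (add_comm _ _)).trans (hF.zsmul n x)

lemma setLIntegral_unit_comp_add {F : ℝ → ℝ≥0∞} (hF : Function.Periodic F 1) (a : ℝ) :
    ∫⁻ x in Icc (0 : ℝ) 1, F (x + a) = ∫⁻ x in Icc (0 : ℝ) 1, F x := by
  rw [← setLIntegral_Ioc_add_one hF a, ← setLIntegral_congr (Ioc_ae_eq_Icc (μ := volume)),
    ← (measurePreserving_add_right volume a).setLIntegral_comp_preimage_emb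
      (measurableEmbedding_addRight a) F]
  simp [add_comm a]

lemma le_of_forall_lt_le_succ {x : ℕ → ℝ} {n : ℕ} (hx : ∀ i < n, x i ≤ x (i + 1)) : x 0 ≤ x n := by
  induction n with
  | zero => rfl
  | succ n ih => exact (ih fun i hi => hx i (by omega)).trans (hx n n.lt_succ_self)

lemma sum_setLIntegral_Ioc_succ (F : ℝ → ℝ≥0∞) {x : ℕ → ℝ} {n : ℕ} (hx : ∀ i < n, x i ≤ x (i + 1)) :
    ∑ i ∈ Finset.range n, ∫⁻ s in Ioc (x i) (x (i + 1)), F s = ∫⁻ s in Ioc (x 0) (x n), F s := by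
  induction n with
  | zero => simp
  | succ n ih =>
    have hx' : ∀ i < n, x i ≤ x (i + 1) := fun i hi => hx i (hi.trans n.lt_succ_self)
    have hle : x 0 ≤ x n := le_of_forall_lt_le_succ hx'
    rw [Finset.sum_range_succ, ih hx',
      ← lintegral_union measurableSet_Ioc (Ioc_disjoint_Ioc_of_le le_rfl),
      Ioc_union_Ioc_eq_Ioc hle (hx n n.lt_succ_self)]

lemma IsPeriodPartition.sum_setLIntegral {n : ℕ} {x : ℕ → ℝ} (hx : IsPeriodPartition n x)
    {F : ℝ → ℝ≥0∞} (hF : Function.Periodic F 1) :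
    ∑ i ∈ Finset.range n, ∫⁻ s in Ioc (x i) (x (i + 1)), F s = ∫⁻ s in Icc (0 : ℝ) 1, F s := by
  rw [sum_setLIntegral_Ioc_succ F fun i hi => (hx.1 i hi).le, hx.2, setLIntegral_Ioc_add_one hF]

end PeriodicIntegral

section LpNorm

variable {p : ℝ} {f F G : ℝ → ℝ → ℝ}

lemma lpNorm2_one (F : ℝ → ℝ → ℝ) :
    lpNorm2 1 F = ∫⁻ x in Icc (0 : ℝ) 1, ∫⁻ y in Icc (0 : ℝ) 1, ‖F x y‖ₑ := by
  simp only [lpNorm2, Real.rpow_one, div_one, ENNReal.rpow_one, Real.enorm_eq_ofReal_abs]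

lemma lpNorm2_eq_eLpNorm (hp : 0 < p) (hF : Measurable (Function.uncurry F)) :
    lpNorm2 p F = eLpNorm (Function.uncurry F) (ENNReal.ofReal p)
      (volume.restrict (Icc (0 : ℝ) 1 ×ˢ Icc (0 : ℝ) 1)) := by
  rw [eLpNorm_eq_lintegral_rpow_enorm_toReal (by simpa using hp) ENNReal.ofReal_ne_top,
    ENNReal.toReal_ofReal hp.le, Measure.volume_eq_prod, ← Measure.prod_restrict,
    lintegral_prod _ (hF.enorm.pow_const p).aemeasurable]
  simp only [lpNorm2, Function.uncurry_apply_pair, Real.enorm_eq_ofReal_abs,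
    ENNReal.ofReal_rpow_of_nonneg (abs_nonneg _) hp.le]

lemma lpNorm2_one_eq_lintegral (hF : Measurable (Function.uncurry F)) :
    lpNorm2 1 F = ∫⁻ z in Icc (0 : ℝ) 1 ×ˢ Icc (0 : ℝ) 1, ‖F z.1 z.2‖ₑ := by
  rw [lpNorm2_eq_eLpNorm one_pos hF, ENNReal.ofReal_one, eLpNorm_one_eq_lintegral_enorm]
  rfl

lemma lpNorm2_add_le (hp : 1 ≤ p) (hF : Measurable (Function.uncurry F))
    (hG : Measurable (Function.uncurry G)) :
    lpNorm2 p (fun x y => F x y + G x y) ≤ lpNorm2 p F + lpNorm2 p G := by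
  have hp₀ : 0 < p := one_pos.trans_le hp
  rw [lpNorm2_eq_eLpNorm hp₀ hF, lpNorm2_eq_eLpNorm hp₀ hG,
    lpNorm2_eq_eLpNorm (F := fun x y => F x y + G x y) hp₀ (hF.add hG)]
  exact eLpNorm_add_le hF.aestronglyMeasurable hG.aestronglyMeasurable (by simpa using hp)

lemma lpNorm2_comp_add (hF : BiPeriodic F) (p a b : ℝ) :
    lpNorm2 p (fun x y => F (x + a) (y + b)) = lpNorm2 p F := by
  have inner (x : ℝ) : ∫⁻ y in Icc (0 : ℝ) 1, ENNReal.ofReal (|F (x + a) (y + b)| ^ p)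
      = ∫⁻ y in Icc (0 : ℝ) 1, ENNReal.ofReal (|F (x + a) y| ^ p) :=
    setLIntegral_unit_comp_add (F := fun y => ENNReal.ofReal (|F (x + a) y| ^ p))
      (fun y => by simp only [hF.2]) b
  have outer := setLIntegral_unit_comp_add
    (F := fun x => ∫⁻ y in Icc (0 : ℝ) 1, ENNReal.ofReal (|F x y| ^ p))
    (fun x => by simp only [hF.1]) a
  simp only [lpNorm2, inner, outer]

lemma lpNorm2_translate_add_le (hp : 1 ≤ p) (hF : Measurable (Function.uncurry F))
    (hG : Measurable (Function.uncurry G)) (hper : BiPeriodic F) (a b : ℝ) :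
    lpNorm2 p (fun x y => F (x + a) (y + b) + G x y) ≤ lpNorm2 p F + lpNorm2 p G := by
  rw [← lpNorm2_comp_add hper p a b]
  exact lpNorm2_add_le hp
    (hF.comp (f := fun z : ℝ × ℝ => (z.1 + a, z.2 + b)) (by fun_prop)) hG

lemma IsPeriodPartition.sum_sum_setLIntegral_enorm {m n : ℕ} {x y : ℕ → ℝ}
    (hx : IsPeriodPartition m x) (hy : IsPeriodPartition n y) (hF : BiPeriodic F)
    (hFm : Measurable (Function.uncurry F)) :
    ∑ i ∈ Finset.range m, ∑ j ∈ Finset.range n,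
      ∫⁻ z in Ioc (x i) (x (i + 1)) ×ˢ Ioc (y j) (y (j + 1)), ‖F z.1 z.2‖ₑ = lpNorm2 1 F := by
  have hmeas : Measurable (fun z : ℝ × ℝ => ‖F z.1 z.2‖ₑ) := hFm.enorm
  simp only [Measure.volume_eq_prod, ← Measure.prod_restrict, lintegral_prod _ hmeas.aemeasurable]
  have inner (i : ℕ) : ∑ j ∈ Finset.range n, ∫⁻ s in Ioc (x i) (x (i + 1)),
      ∫⁻ t in Ioc (y j) (y (j + 1)), ‖F s t‖ₑ
      = ∫⁻ s in Ioc (x i) (x (i + 1)), ∫⁻ t in Icc (0 : ℝ) 1, ‖F s t‖ₑ := by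
    rw [← lintegral_finsetSum _ fun j _ => hmeas.lintegral_prod_right]
    exact lintegral_congr fun s => hy.sum_setLIntegral fun t => by simp only [hF.2]
  rw [Finset.sum_congr rfl fun i _ => inner i, lpNorm2_one]
  exact hx.sum_setLIntegral fun s => by simp only [hF.1]

lemma MemLp2.locallyIntegrable (hf : MemLp2 1 f) :
    LocallyIntegrable (Function.uncurry f) (volume : Measure (ℝ × ℝ)) := by
  rintro ⟨a, b⟩
  refine ⟨Ioc (a - 1 / 2) (a - 1 / 2 + 1) ×ˢ Ioc (b - 1 / 2) (b - 1 / 2 + 1), prod_mem_nhds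
    (Ioc_mem_nhds (by linarith) (by linarith)) (Ioc_mem_nhds (by linarith) (by linarith)),
    hf.1.aestronglyMeasurable, ?_⟩
  have htriv (c : ℝ) : IsPeriodPartition 1 (fun i => c + i) := ⟨by simp, by simp⟩
  have hcell := (htriv (a - 1 / 2)).sum_sum_setLIntegral_enorm (htriv (b - 1 / 2)) hf.2.1 hf.1
  rw [hasFiniteIntegral_iff_enorm]
  refine lt_of_eq_of_lt ?_ hf.2.2
  simpa [Function.uncurry_def] using hcell

end LpNorm

section MixedDifference

variable {p : ℝ} {f g : ℝ → ℝ → ℝ}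

lemma measurable_mixedDiff (hf : Measurable (Function.uncurry f)) (s t : ℝ) :
    Measurable (Function.uncurry (mixedDiff f s t)) := by
  have htranslate (u v : ℝ) : Measurable (fun z : ℝ × ℝ => f (z.1 + u) (z.2 + v)) :=
    hf.comp (f := fun z : ℝ × ℝ => (z.1 + u, z.2 + v)) (by fun_prop)
  simpa [Function.uncurry_def, mixedDiff, rectIncr, Pi.add_def, Pi.sub_def] using
    (((htranslate s t).sub (htranslate s 0)).sub (htranslate 0 t)).add (htranslate 0 0)

lemma BiPeriodic.mixedDiff (hf : BiPeriodic f) (s t : ℝ) : BiPeriodic (mixedDiff f s t) :=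
  ⟨fun x y => by simp only [_root_.mixedDiff, rectIncr, add_right_comm x 1, hf.1],
    fun x y => by simp only [_root_.mixedDiff, rectIncr, add_right_comm y 1, hf.2]⟩

lemma lpNorm2_mixedDiff_le_mixedModulus (f : ℝ → ℝ → ℝ) {u v s t : ℝ} (hs : s ∈ Icc 0 u)
    (ht : t ∈ Icc 0 v) : lpNorm2 p (mixedDiff f s t) ≤ mixedModulus p f u v :=
  le_iSup₂_of_le s hs (le_iSup₂_of_le t ht le_rfl)

lemma mixedModulus_le_iff {u v : ℝ} {C : ℝ≥0∞} : mixedModulus p f u v ≤ C ↔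
    ∀ s ∈ Icc 0 u, ∀ t ∈ Icc 0 v, lpNorm2 p (mixedDiff f s t) ≤ C := by
  simp only [mixedModulus, iSup_le_iff]
  rfl

lemma lpNorm2_mixedDiff_div_le_mixedLipConst (f : ℝ → ℝ → ℝ) {s t : ℝ} (hs : 0 < s) (ht : 0 < t) :
    lpNorm2 p (mixedDiff f s t) / ENNReal.ofReal (s * t) ≤ mixedLipConst p f :=
  (ENNReal.div_le_div_right (lpNorm2_mixedDiff_le_mixedModulus f
    ⟨hs.le, le_rfl⟩ ⟨ht.le, le_rfl⟩) _).trans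
    (le_iSup₂_of_le s hs (le_iSup₂_of_le t ht le_rfl))

lemma lpNorm2_mixedDiff_add_left (hp : 1 ≤ p) (hf : Measurable (Function.uncurry f))
    (hper : BiPeriodic f) (s s' t : ℝ) : lpNorm2 p (mixedDiff f (s + s') t) ≤
      lpNorm2 p (mixedDiff f s t) + lpNorm2 p (mixedDiff f s' t) := by
  have hsplit : mixedDiff f (s + s') t =
      fun x y => mixedDiff f s t (x + s') (y + 0) + mixedDiff f s' t x y := by
    ext x y
    simp only [mixedDiff, rectIncr, add_zero, add_assoc, add_comm s' s]
    ring
  rw [hsplit]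
  exact lpNorm2_translate_add_le hp (measurable_mixedDiff hf s t) (measurable_mixedDiff hf s' t)
    (hper.mixedDiff s t) s' 0

lemma lpNorm2_mixedDiff_add_right (hp : 1 ≤ p) (hf : Measurable (Function.uncurry f))
    (hper : BiPeriodic f) (s t t' : ℝ) : lpNorm2 p (mixedDiff f s (t + t')) ≤
      lpNorm2 p (mixedDiff f s t) + lpNorm2 p (mixedDiff f s t') := by
  have hsplit : mixedDiff f s (t + t') =
      fun x y => mixedDiff f s t (x + 0) (y + t') + mixedDiff f s t' x y := by
    ext x y
    simp only [mixedDiff, rectIncr, add_zero, add_assoc, add_comm t' t]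
    ring
  rw [hsplit]
  exact lpNorm2_translate_add_le hp (measurable_mixedDiff hf s t) (measurable_mixedDiff hf s t')
    (hper.mixedDiff s t) 0 t'

lemma le_nat_mul_of_subadditive {φ : ℝ → ℝ≥0∞} (hzero : φ 0 = 0)
    (hadd : ∀ s s', φ (s + s') ≤ φ s + φ s') (n : ℕ) (s : ℝ) : φ (n * s) ≤ n * φ s := by
  induction n with
  | zero => simp [hzero]
  | succ n ih =>
    push_cast
    rw [add_mul, add_mul, one_mul, one_mul]
    exact (hadd _ _).trans (by gcongr)

lemma lpNorm2_mixedDiff_zero_left (hp : 0 < p) (f : ℝ → ℝ → ℝ) (t : ℝ) :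
    lpNorm2 p (mixedDiff f 0 t) = 0 := by
  simp [lpNorm2, mixedDiff, rectIncr, Real.zero_rpow hp.ne', hp]

lemma lpNorm2_mixedDiff_zero_right (hp : 0 < p) (f : ℝ → ℝ → ℝ) (s : ℝ) :
    lpNorm2 p (mixedDiff f s 0) = 0 := by
  simp [lpNorm2, mixedDiff, rectIncr, Real.zero_rpow hp.ne', hp]

lemma lpNorm2_mixedDiff_nat_mul (hp : 1 ≤ p) (hf : Measurable (Function.uncurry f))
    (hper : BiPeriodic f) (a b : ℕ) (s t : ℝ) :
    lpNorm2 p (mixedDiff f (a * s) (b * t)) ≤ a * (b * lpNorm2 p (mixedDiff f s t)) := by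
  have hp₀ : 0 < p := one_pos.trans_le hp
  calc lpNorm2 p (mixedDiff f (a * s) (b * t))
      ≤ a * lpNorm2 p (mixedDiff f s (b * t)) :=
        le_nat_mul_of_subadditive (φ := fun s => lpNorm2 p (mixedDiff f s (b * t)))
          (lpNorm2_mixedDiff_zero_left hp₀ f _)
          (fun s s' => lpNorm2_mixedDiff_add_left hp hf hper s s' _) a s
    _ ≤ a * (b * lpNorm2 p (mixedDiff f s t)) := by
        gcongr
        exact le_nat_mul_of_subadditive (φ := fun t => lpNorm2 p (mixedDiff f s t))
          (lpNorm2_mixedDiff_zero_right hp₀ f s) (lpNorm2_mixedDiff_add_right hp hf hper s) b t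

lemma ae_mixedDiff_eq_of_ae_eq_add {φ₁ φ₂ : ℝ → ℝ}
    (hfg : ∀ᵐ z : ℝ × ℝ, f z.1 z.2 = g z.1 z.2 + φ₁ z.1 + φ₂ z.2) (s t : ℝ) :
    ∀ᵐ z : ℝ × ℝ, mixedDiff f s t z.1 z.2 = mixedDiff g s t z.1 z.2 := by
  have hshift (u v : ℝ) : ∀ᵐ z : ℝ × ℝ, f (z.1 + u) (z.2 + v) =
      g (z.1 + u) (z.2 + v) + φ₁ (z.1 + u) + φ₂ (z.2 + v) :=
    (measurePreserving_add_right volume ((u, v) : ℝ × ℝ)).quasiMeasurePreserving.ae hfg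
  filter_upwards [hshift s t, hshift s 0, hshift 0 t, hshift 0 0] with z h₁₁ h₁₀ h₀₁ h₀₀
  simp only [add_zero] at h₁₀ h₀₁ h₀₀
  simp only [mixedDiff, rectIncr, h₁₁, h₁₀, h₀₁, h₀₀]
  ring

end MixedDifference

section LowerBound

variable {f g : ℝ → ℝ → ℝ}

lemma sum_mesh_enorm_mixedDiff_le_vp2 (g : ℝ → ℝ → ℝ) {m n : ℕ} {r r' : ℝ} (hr : 0 < r)
    (hr' : 0 < r') (hm : m * r < 1) (hn : n * r' < 1) (x y : ℝ) :
    ∑ i ∈ Finset.range m, ∑ j ∈ Finset.range n, ‖mixedDiff g r r' (x + i * r) (y + j * r')‖ₑ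
      ≤ vp2 1 g := by
  refine le_trans ?_ (vp2_one_le_iff.1 le_rfl (m + 1) (n + 1) _ _
    (isPeriodPartition_meshPartition hr hm x) (isPeriodPartition_meshPartition hr' hn y))
  have hcell {i j : ℕ} (hi : i ∈ Finset.range m) (hj : j ∈ Finset.range n) :
      mixedDiff g r r' (x + i * r) (y + j * r') = rectIncr g (meshPartition m r x i)
        (meshPartition m r x (i + 1)) (meshPartition n r' y j) (meshPartition n r' y (j + 1)) := by
    rw [Finset.mem_range] at hi hj
    rw [meshPartition_of_le hi.le, meshPartition_of_le hi, meshPartition_of_le hj.le,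
      meshPartition_of_le hj, mixedDiff]
    push_cast
    ring_nf
  rw [Finset.sum_congr rfl fun i hi => Finset.sum_congr rfl fun j hj => by rw [hcell hi hj]]
  refine (Finset.sum_le_sum fun i _ => ?_).trans
    (Finset.sum_le_sum_of_subset (Finset.range_subset_range.2 m.le_succ))
  exact Finset.sum_le_sum_of_subset (Finset.range_subset_range.2 n.le_succ)

lemma nat_mul_lpNorm2_mixedDiff_eq_lintegral_sum (hf : Measurable (Function.uncurry f))
    (hper : BiPeriodic f) (m n : ℕ) (r r' : ℝ) :
    m * (n * lpNorm2 1 (mixedDiff f r r')) = ∫⁻ z in Icc (0 : ℝ) 1 ×ˢ Icc (0 : ℝ) 1,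
      ∑ i ∈ Finset.range m, ∑ j ∈ Finset.range n,
        ‖mixedDiff f r r' (z.1 + i * r) (z.2 + j * r')‖ₑ := by
  have hmeas (a b : ℝ) :
      Measurable (Function.uncurry fun x y => mixedDiff f r r' (x + a) (y + b)) :=
    (measurable_mixedDiff hf r r').comp (f := fun z : ℝ × ℝ => (z.1 + a, z.2 + b)) (by fun_prop)
  have henorm (i j : ℕ) :
      Measurable fun z : ℝ × ℝ => ‖mixedDiff f r r' (z.1 + i * r) (z.2 + j * r')‖ₑ :=
    (hmeas _ _).enorm
  have hterm (i j : ℕ) : ∫⁻ z in Icc (0 : ℝ) 1 ×ˢ Icc (0 : ℝ) 1,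
      ‖mixedDiff f r r' (z.1 + i * r) (z.2 + j * r')‖ₑ = lpNorm2 1 (mixedDiff f r r') := by
    rw [← lpNorm2_comp_add (hper.mixedDiff r r') 1 (i * r) (j * r'),
      lpNorm2_one_eq_lintegral (hmeas _ _)]
  rw [lintegral_finsetSum _ fun i _ => Finset.measurable_sum _ fun j _ => henorm i j]
  simp only [lintegral_finsetSum _ fun j _ => henorm _ j, hterm, Finset.sum_const,
    Finset.card_range, nsmul_eq_mul]

lemma nat_mul_lpNorm2_mixedDiff_le_vp2 (hf : Measurable (Function.uncurry f)) (hper : BiPeriodic f)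
    (hfg : ∀ s t, ∀ᵐ z : ℝ × ℝ, mixedDiff f s t z.1 z.2 = mixedDiff g s t z.1 z.2)
    {m n : ℕ} {r r' : ℝ} (hr : 0 < r) (hr' : 0 < r') (hm : m * r < 1) (hn : n * r' < 1) :
    m * (n * lpNorm2 1 (mixedDiff f r r')) ≤ vp2 1 g := by
  have hshift : ∀ᵐ z : ℝ × ℝ, ∀ i j : ℕ, mixedDiff f r r' (z.1 + i * r) (z.2 + j * r') =
      mixedDiff g r r' (z.1 + i * r) (z.2 + j * r') :=
    ae_all_iff.2 fun i => ae_all_iff.2 fun j => (measurePreserving_add_right volume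
      ((i * r, j * r') : ℝ × ℝ)).quasiMeasurePreserving.ae (hfg r r')
  rw [nat_mul_lpNorm2_mixedDiff_eq_lintegral_sum hf hper]
  calc ∫⁻ z in Icc (0 : ℝ) 1 ×ˢ Icc (0 : ℝ) 1, ∑ i ∈ Finset.range m, ∑ j ∈ Finset.range n,
        ‖mixedDiff f r r' (z.1 + i * r) (z.2 + j * r')‖ₑ
      ≤ ∫⁻ _ in Icc (0 : ℝ) 1 ×ˢ Icc (0 : ℝ) 1, vp2 1 g := by
        refine lintegral_mono_ae (ae_restrict_of_ae (hshift.mono fun z hz => ?_))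
        simp only [hz]
        exact sum_mesh_enorm_mixedDiff_le_vp2 g hr hr' hm hn z.1 z.2
    _ = vp2 1 g := by
        rw [setLIntegral_const, Measure.volume_eq_prod, Measure.prod_prod]
        simp

lemma exists_nat_mul_div_lt_one {s : ℝ} (hs : 0 < s) {n : ℕ} (hn : 0 < n) :
    ∃ k : ℕ, 0 < k ∧ n * (s / k) < 1 ∧ (k : ℝ) ≤ n * (s + 1 / n) := by
  have hn' : (0 : ℝ) < n := Nat.cast_pos.2 hn
  refine ⟨⌊n * s⌋₊ + 1, Nat.succ_pos _, ?_, ?_⟩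
  · rw [← mul_div_assoc, div_lt_one (by positivity)]
    exact_mod_cast Nat.lt_floor_add_one (n * s)
  · rw [mul_add, mul_one_div_cancel hn'.ne']
    push_cast
    gcongr
    exact Nat.floor_le (by positivity)

lemma lpNorm2_mixedDiff_le_vp2_mul_mesh (hf : Measurable (Function.uncurry f))
    (hper : BiPeriodic f)
    (hfg : ∀ s t, ∀ᵐ z : ℝ × ℝ, mixedDiff f s t z.1 z.2 = mixedDiff g s t z.1 z.2)
    {s t : ℝ} (hs : 0 < s) (ht : 0 < t) {n : ℕ} (hn : 0 < n) :
    lpNorm2 1 (mixedDiff f s t) ≤ ENNReal.ofReal ((s + 1 / n) * (t + 1 / n)) * vp2 1 g := by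
  obtain ⟨a, ha, has, hale⟩ := exists_nat_mul_div_lt_one hs hn
  obtain ⟨b, hb, hbt, hble⟩ := exists_nat_mul_div_lt_one ht hn
  have hmesh := nat_mul_lpNorm2_mixedDiff_le_vp2 hf hper hfg (r := s / a) (r' := t / b)
    (by positivity) (by positivity) has hbt
  have hcast {k : ℕ} {w : ℝ} (hk : (k : ℝ) ≤ n * w) : (k : ℝ≥0∞) ≤ n * ENNReal.ofReal w := by
    rw [← ENNReal.ofReal_natCast k, ← ENNReal.ofReal_natCast n,
      ← ENNReal.ofReal_mul (Nat.cast_nonneg n)]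
    exact ENNReal.ofReal_le_ofReal hk
  have hsub := lpNorm2_mixedDiff_nat_mul le_rfl hf hper a b (s / a) (t / b)
  rw [mul_div_cancel₀ s (by positivity), mul_div_cancel₀ t (by positivity)] at hsub
  set S := lpNorm2 1 (mixedDiff f (s / a) (t / b))
  calc lpNorm2 1 (mixedDiff f s t) ≤ a * (b * S) := hsub
    _ ≤ (n * ENNReal.ofReal (s + 1 / n)) * ((n * ENNReal.ofReal (t + 1 / n)) * S) := by
        gcongr
        exacts [hcast hale, hcast hble]
    _ = ENNReal.ofReal ((s + 1 / n) * (t + 1 / n)) * (n * (n * S)) := by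
        rw [ENNReal.ofReal_mul (by positivity)]
        ring
    _ ≤ ENNReal.ofReal ((s + 1 / n) * (t + 1 / n)) * vp2 1 g := by gcongr

lemma lpNorm2_mixedDiff_le_vp2_mul (hf : Measurable (Function.uncurry f)) (hper : BiPeriodic f)
    (hfg : ∀ s t, ∀ᵐ z : ℝ × ℝ, mixedDiff f s t z.1 z.2 = mixedDiff g s t z.1 z.2)
    {s t : ℝ} (hs : 0 ≤ s) (ht : 0 ≤ t) :
    lpNorm2 1 (mixedDiff f s t) ≤ vp2 1 g * ENNReal.ofReal (s * t) := by
  rcases hs.eq_or_lt with rfl | hs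
  · simp [lpNorm2_mixedDiff_zero_left one_pos]
  rcases ht.eq_or_lt with rfl | ht
  · simp [lpNorm2_mixedDiff_zero_right one_pos]
  have hreal : Tendsto (fun n : ℕ => (s + 1 / n) * (t + 1 / n)) atTop (𝓝 (s * t)) := by
    simpa using (tendsto_one_div_atTop_nhds_zero_nat.const_add s).mul
      (tendsto_one_div_atTop_nhds_zero_nat.const_add t)
  have hlim : Tendsto (fun n : ℕ => ENNReal.ofReal ((s + 1 / n) * (t + 1 / n)) * vp2 1 g) atTop
      (𝓝 (ENNReal.ofReal (s * t) * vp2 1 g)) :=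
    ENNReal.Tendsto.mul_const (ENNReal.tendsto_ofReal hreal)
      (Or.inl (ENNReal.ofReal_pos.2 (mul_pos hs ht)).ne')
  rw [mul_comm]
  exact ge_of_tendsto hlim ((eventually_gt_atTop 0).mono fun n hn =>
    lpNorm2_mixedDiff_le_vp2_mul_mesh hf hper hfg hs ht hn)

lemma mixedLipConst_le_vp2 (hf : Measurable (Function.uncurry f)) (hper : BiPeriodic f)
    (hfg : ∀ s t, ∀ᵐ z : ℝ × ℝ, mixedDiff f s t z.1 z.2 = mixedDiff g s t z.1 z.2) :
    mixedLipConst 1 f ≤ vp2 1 g := by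
  simp only [mixedLipConst, iSup_le_iff]
  intro u _ v _
  refine ENNReal.div_le_of_le_mul (mixedModulus_le_iff.2 fun s hs t ht => ?_)
  refine (lpNorm2_mixedDiff_le_vp2_mul hf hper hfg hs.1 ht.1).trans ?_
  gcongr
  exacts [ht.1, hs.2, ht.2]

end LowerBound

section SteklovMean

/-- The Steklov mean of `f` with step `h`: its average over the square `(x, x + h] × (y, y + h]`. -/
noncomputable def steklovMean (f : ℝ → ℝ → ℝ) (h x y : ℝ) : ℝ :=
  (h * h)⁻¹ * ∫ z in Ioc x (x + h) ×ˢ Ioc y (y + h), f z.1 z.2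

variable {f : ℝ → ℝ → ℝ}

lemma preimage_add_Ioc_prod_Ioc (s t a b c d : ℝ) :
    (· + ((s, t) : ℝ × ℝ)) ⁻¹' (Ioc (a + s) (b + s) ×ˢ Ioc (c + t) (d + t)) =
      Ioc a b ×ˢ Ioc c d := by
  ext z
  simp

lemma setIntegral_Ioc_prod_Ioc_comp_add (f : ℝ → ℝ → ℝ) (s t a b c d : ℝ) :
    ∫ z in Ioc a b ×ˢ Ioc c d, f (z.1 + s) (z.2 + t) =
      ∫ z in Ioc (a + s) (b + s) ×ˢ Ioc (c + t) (d + t), f z.1 z.2 := by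
  rw [← preimage_add_Ioc_prod_Ioc s t]
  exact (measurePreserving_add_right volume ((s, t) : ℝ × ℝ)).setIntegral_preimage_emb
    (measurableEmbedding_addRight _) (Function.uncurry f) _

lemma BiPeriodic.steklovMean (hf : BiPeriodic f) (h : ℝ) : BiPeriodic (steklovMean f h) := by
  refine ⟨fun x y => ?_, fun x y => ?_⟩
  · have hshift := setIntegral_Ioc_prod_Ioc_comp_add f 1 0 x (x + h) y (y + h)
    simp only [hf.1, add_zero] at hshift
    rw [_root_.steklovMean, _root_.steklovMean, hshift, add_right_comm x h]
  · have hshift := setIntegral_Ioc_prod_Ioc_comp_add f 0 1 x (x + h) y (y + h)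
    simp only [hf.2, add_zero] at hshift
    rw [_root_.steklovMean, _root_.steklovMean, hshift, add_right_comm y h]

lemma setIntegral_Ioc_prod_add_adjacent {F : ℝ × ℝ → ℝ} {a b c : ℝ} {T : Set ℝ} (hab : a ≤ b)
    (hbc : b ≤ c) (hT : MeasurableSet T) (hF : IntegrableOn F (Ioc a c ×ˢ T)) :
    (∫ z in Ioc a b ×ˢ T, F z) + ∫ z in Ioc b c ×ˢ T, F z = ∫ z in Ioc a c ×ˢ T, F z := by
  rw [← Ioc_union_Ioc_eq_Ioc hab hbc, union_prod] at hF ⊢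
  exact (setIntegral_union ((Ioc_disjoint_Ioc_of_le le_rfl).set_prod_left T T)
    (measurableSet_Ioc.prod hT) hF.left_of_union hF.right_of_union).symm

lemma setIntegral_Ioc_prod_window_sub {F : ℝ × ℝ → ℝ} {a b h : ℝ} {T : Set ℝ} (hab : a ≤ b)
    (hh : 0 ≤ h) (hT : MeasurableSet T) (hF : IntegrableOn F (Ioc a (b + h) ×ˢ T)) :
    (∫ z in Ioc b (b + h) ×ˢ T, F z) - ∫ z in Ioc a (a + h) ×ˢ T, F z =
      (∫ z in Ioc (a + h) (b + h) ×ˢ T, F z) - ∫ z in Ioc a b ×ˢ T, F z := by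
  have hmid_b := setIntegral_Ioc_prod_add_adjacent hab (le_add_of_nonneg_right hh) hT hF
  have hmid_ah := setIntegral_Ioc_prod_add_adjacent (le_add_of_nonneg_right hh)
    (add_le_add_left hab h) hT hF
  linarith

lemma setIntegral_prod_Ioc_window_sub {F : ℝ × ℝ → ℝ} {c d h : ℝ} {S : Set ℝ} (hcd : c ≤ d)
    (hh : 0 ≤ h) (hS : MeasurableSet S) (hF : IntegrableOn F (S ×ˢ Ioc c (d + h))) :
    (∫ z in S ×ˢ Ioc d (d + h), F z) - ∫ z in S ×ˢ Ioc c (c + h), F z =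
      (∫ z in S ×ˢ Ioc (c + h) (d + h), F z) - ∫ z in S ×ˢ Ioc c d, F z := by
  have hswap := setIntegral_Ioc_prod_window_sub (F := fun z => F z.swap) hcd hh hS hF.swap
  simpa only [Measure.volume_eq_prod, setIntegral_prod_swap] using hswap

lemma integrableOn_Ioc_prod_Ioc (hf : LocallyIntegrable (Function.uncurry f)) (a b c d : ℝ) :
    IntegrableOn (fun z : ℝ × ℝ => f z.1 z.2) (Ioc a b ×ˢ Ioc c d) :=
  (hf.integrableOn_isCompact (isCompact_Icc.prod isCompact_Icc)).mono_set
    (prod_mono Ioc_subset_Icc_self Ioc_subset_Icc_self)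

lemma integrableOn_Ioc_prod_Ioc_comp_add (hf : LocallyIntegrable (Function.uncurry f))
    (s t a b c d : ℝ) :
    IntegrableOn (fun z : ℝ × ℝ => f (z.1 + s) (z.2 + t)) (Ioc a b ×ˢ Ioc c d) := by
  rw [← preimage_add_Ioc_prod_Ioc s t]
  exact ((measurePreserving_add_right volume ((s, t) : ℝ × ℝ)).integrableOn_comp_preimage
    (measurableEmbedding_addRight _)).2 (integrableOn_Ioc_prod_Ioc hf _ _ _ _)

lemma setIntegral_mixedDiff (hf : LocallyIntegrable (Function.uncurry f)) (s t a b c d : ℝ) :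
    ∫ z in Ioc a b ×ˢ Ioc c d, mixedDiff f s t z.1 z.2 =
      (∫ z in Ioc (a + s) (b + s) ×ˢ Ioc (c + t) (d + t), f z.1 z.2)
      - (∫ z in Ioc (a + s) (b + s) ×ˢ Ioc c d, f z.1 z.2)
      - (∫ z in Ioc a b ×ˢ Ioc (c + t) (d + t), f z.1 z.2)
      + ∫ z in Ioc a b ×ˢ Ioc c d, f z.1 z.2 := by
  have hint (u v : ℝ) := integrableOn_Ioc_prod_Ioc_comp_add hf u v a b c d
  have hshift (u v : ℝ) := setIntegral_Ioc_prod_Ioc_comp_add f u v a b c d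
  have hst := hint s t
  have hs := hint s 0
  have ht := hint 0 t
  have hs' := hshift s 0
  have ht' := hshift 0 t
  simp only [add_zero] at hs ht hs' ht'
  have hsum := integral_add' ((hst.sub hs).sub ht) (integrableOn_Ioc_prod_Ioc hf a b c d)
  rw [integral_sub' (hst.sub hs) ht, integral_sub' hst hs] at hsum
  rw [← hshift s t, ← hs', ← ht']
  exact hsum

lemma rectIncr_steklovMean (hf : LocallyIntegrable (Function.uncurry f)) {a b c d h : ℝ}
    (hab : a ≤ b) (hcd : c ≤ d) (hh : 0 ≤ h) :
    rectIncr (steklovMean f h) a b c d =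
      (h * h)⁻¹ * ∫ z in Ioc a b ×ˢ Ioc c d, mixedDiff f h h z.1 z.2 := by
  have hbox := integrableOn_Ioc_prod_Ioc hf
  have horiz (y : ℝ) := setIntegral_Ioc_prod_window_sub hab hh measurableSet_Ioc
    (hbox a (b + h) y (y + h))
  have hvert (x x' : ℝ) := setIntegral_prod_Ioc_window_sub hcd hh measurableSet_Ioc
    (hbox x x' c (d + h))
  rw [setIntegral_mixedDiff hf]
  simp only [rectIncr, steklovMean]
  linear_combination (h * h)⁻¹ *
    (horiz d - horiz c + hvert (a + h) (b + h) - hvert a b)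

lemma enorm_rectIncr_steklovMean_le (hf : LocallyIntegrable (Function.uncurry f)) {a b c d h : ℝ}
    (hab : a ≤ b) (hcd : c ≤ d) (hh : 0 < h) :
    ‖rectIncr (steklovMean f h) a b c d‖ₑ ≤
      (ENNReal.ofReal (h * h))⁻¹ * ∫⁻ z in Ioc a b ×ˢ Ioc c d, ‖mixedDiff f h h z.1 z.2‖ₑ := by
  have hpos : 0 < h * h := mul_pos hh hh
  rw [rectIncr_steklovMean hf hab hcd hh.le, enorm_mul, enorm_inv hpos.ne',
    Real.enorm_of_nonneg hpos.le]
  gcongr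
  exact enorm_integral_le_lintegral_enorm _

lemma vp2_steklovMean_le (hf : MemLp2 1 f) {h : ℝ} (hh : 0 < h) :
    vp2 1 (steklovMean f h) ≤ mixedLipConst 1 f := by
  refine vp2_one_le_iff.2 fun m n x y hx hy => le_trans ?_
    (lpNorm2_mixedDiff_div_le_mixedLipConst f hh hh)
  rw [ENNReal.div_eq_inv_mul,
    ← hx.sum_sum_setLIntegral_enorm hy (hf.2.1.mixedDiff h h) (measurable_mixedDiff hf.1 h h)]
  simp only [Finset.mul_sum]
  refine Finset.sum_le_sum fun i hi => Finset.sum_le_sum fun j hj => ?_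
  exact enorm_rectIncr_steklovMean_le hf.locallyIntegrable
    (hx.1 i (Finset.mem_range.1 hi)).le (hy.1 j (Finset.mem_range.1 hj)).le hh

lemma steklovMean_eq_average_closedBall (f : ℝ → ℝ → ℝ) {h : ℝ} (hh : 0 ≤ h) (z : ℝ × ℝ) :
    steklovMean f h z.1 z.2 =
      ⨍ w in Metric.closedBall (z.1 + h / 2, z.2 + h / 2) (h / 2), f w.1 w.2 := by
  have hsquare : (volume : Measure (ℝ × ℝ)).real (Icc z.1 (z.1 + h) ×ˢ Icc z.2 (z.2 + h)) =
      h * h := by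
    rw [Measure.volume_eq_prod, measureReal_prod_prod]
    simp [hh]
  have hae : (Icc z.1 (z.1 + h) ×ˢ Icc z.2 (z.2 + h) : Set (ℝ × ℝ)) =ᵐ[volume]
      Ioc z.1 (z.1 + h) ×ˢ Ioc z.2 (z.2 + h) :=
    Measure.set_prod_ae_eq Ioc_ae_eq_Icc.symm Ioc_ae_eq_Icc.symm
  rw [← closedBall_prod_same, Real.closedBall_eq_Icc, Real.closedBall_eq_Icc]
  simp only [add_sub_cancel_right, add_assoc, add_halves]
  rw [setAverage_eq, hsquare, setIntegral_congr_set hae, smul_eq_mul, steklovMean]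

lemma ae_tendsto_steklovMean (hf : LocallyIntegrable (Function.uncurry f)) :
    ∀ᵐ z : ℝ × ℝ, Tendsto (fun h => steklovMean f h z.1 z.2) (𝓝[>] 0) (𝓝 (f z.1 z.2)) := by
  filter_upwards [IsUnifLocDoublingMeasure.ae_tendsto_average volume hf 1] with z hz
  have hradius : Tendsto (fun h : ℝ => h / 2) (𝓝[>] 0) (𝓝[>] 0) := by
    refine tendsto_nhdsWithin_iff.2
      ⟨?_, eventually_mem_nhdsWithin.mono fun h hh => half_pos (mem_Ioi.1 hh)⟩
    have hid : Tendsto (fun h : ℝ => h) (𝓝[>] 0) (𝓝 0) := nhdsWithin_le_nhds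
    simpa using hid.div_const 2
  have hmem : ∀ᶠ h : ℝ in 𝓝[>] 0,
      z ∈ Metric.closedBall (z.1 + h / 2, z.2 + h / 2) (1 * (h / 2)) := by
    filter_upwards [self_mem_nhdsWithin] with h hh
    simp [Prod.dist_eq, abs_of_pos (mem_Ioi.1 hh)]
  refine (hz (fun h => (z.1 + h / 2, z.2 + h / 2)) (fun h => h / 2) hradius hmem).congr' ?_
  filter_upwards [self_mem_nhdsWithin] with h hh
  exact (steklovMean_eq_average_closedBall f (le_of_lt hh) z).symm

end SteklovMean

section Decomposition

variable {f : ℝ → ℝ → ℝ}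

lemma exists_ae_prod_sections {α β : Type*} [MeasurableSpace α] [MeasurableSpace β]
    {μ : Measure α} {ν : Measure β} [SFinite μ] [SFinite ν] [NeZero μ] [NeZero ν]
    {P : α × β → Prop} (hP : ∀ᵐ z ∂μ.prod ν, P z) :
    ∃ a b, P (a, b) ∧ (∀ᵐ y ∂ν, P (a, y)) ∧ ∀ᵐ x ∂μ, P (x, b) := by
  have hrow : ∀ᵐ x ∂μ, ∀ᵐ y ∂ν, P (x, y) := Measure.ae_ae_of_ae_prod hP
  have hcol : ∀ᵐ y ∂ν, ∀ᵐ x ∂μ, P (x, y) := Measure.ae_ae_of_ae_prod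
    (Measure.measurePreserving_swap.quasiMeasurePreserving.ae hP)
  obtain ⟨a, ha⟩ := hrow.exists
  obtain ⟨b, hab, hb⟩ := (ha.and hcol).exists
  exact ⟨a, b, hab, ha, hb⟩

theorem exists_memHp2_ae_eq_add (hf : MemLp2 1 f) (hfin : mixedLipConst 1 f < ⊤) :
    ∃ (g : ℝ → ℝ → ℝ) (φ₁ φ₂ : ℝ → ℝ), BiPeriodic g ∧ MemHp2 1 g ∧
      (∀ᵐ z : ℝ × ℝ, f z.1 z.2 = g z.1 z.2 + φ₁ z.1 + φ₂ z.2) ∧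
      vp2 1 g ≤ mixedLipConst 1 f := by
  have hconv := ae_tendsto_steklovMean hf.locallyIntegrable
  obtain ⟨x₀, y₀, h₀, hx₀, hy₀⟩ := exists_ae_prod_sections hconv
  have hbound : ∀ᶠ h in 𝓝[>] (0 : ℝ), vp2 1 (steklovMean f h) ≤ mixedLipConst 1 f :=
    eventually_mem_nhdsWithin.mono fun h hh => vp2_steklovMean_le hf hh
  obtain ⟨g, hper, hg, hlim⟩ := exists_biPeriodic_limit_rectIncr one_pos hfin.ne
    (fun h => hf.2.1.steklovMean h) hbound x₀ y₀
  have hleft (y : ℝ) : g x₀ y = 0 := hlim x₀ y 0 (by simp [rectIncr])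
  have hbottom (x : ℝ) : g x y₀ = 0 := hlim x y₀ 0 (by simp [rectIncr])
  refine ⟨g, fun x => f x y₀, fun y => f x₀ y - f x₀ y₀, hper,
    memHp2_of_vanishing_sections one_pos hper (hg.trans_lt hfin) hleft hbottom, ?_, hg⟩
  filter_upwards [hconv, Measure.quasiMeasurePreserving_fst.ae hy₀,
    Measure.quasiMeasurePreserving_snd.ae hx₀] with z hz hz₁ hz₂
  rw [hlim z.1 z.2 _ (((hz.sub hz₁).sub hz₂).add h₀)]
  ring

lemma mixedLipConst_le_ofReal {p M : ℝ} (hM : ∀ u v : ℝ, 0 < u → 0 < v →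
    mixedModulus p f u v ≤ ENNReal.ofReal (M * (u * v))) :
    mixedLipConst p f ≤ ENNReal.ofReal M := by
  refine iSup₂_le fun u hu => iSup₂_le fun v hv => ENNReal.div_le_of_le_mul ?_
  rw [← ENNReal.ofReal_mul' (mul_pos hu hv).le]
  exact hM u v hu hv

end Decomposition

/-- If `f ∈ L¹([0,1]²)` and `ω(f;u,v)₁ = O(uv)`, then there exist
`g ∈ H₁⁽²⁾` and univariate `φ₁, φ₂` such that `f(x,y) = g(x,y) + φ₁(x) + φ₂(y)` a.e.,
and `v₁⁽²⁾(g) = sup_{u,v>0} ω(f;u,v)₁ / (uv)`. -/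
theorem statement2 (f : ℝ → ℝ → ℝ) (hf : MemLp2 1 f) (M : ℝ)
    (hM : ∀ u v : ℝ, 0 < u → 0 < v →
      mixedModulus 1 f u v ≤ ENNReal.ofReal (M * (u * v))) :
    ∃ (g : ℝ → ℝ → ℝ) (φ₁ φ₂ : ℝ → ℝ),
      BiPeriodic g ∧ MemHp2 1 g ∧
      (∀ᵐ z : ℝ × ℝ ∂volume, f z.1 z.2 = g z.1 z.2 + φ₁ z.1 + φ₂ z.2) ∧
      vp2 1 g = ⨆ (u : ℝ) (_ : 0 < u) (v : ℝ) (_ : 0 < v),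
        mixedModulus 1 f u v / ENNReal.ofReal (u * v) := by
  obtain ⟨g, φ₁, φ₂, hper, hg, hae, hle⟩ := exists_memHp2_ae_eq_add hf
    ((mixedLipConst_le_ofReal hM).trans_lt ENNReal.ofReal_lt_top)
  exact ⟨g, φ₁, φ₂, hper, hg, hae, hle.antisymm
    (mixedLipConst_le_vp2 hf.1 hf.2.1 (ae_mixedDiff_eq_of_ae_eq_add hae))⟩
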